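/- Let G be a simple graph on Fin N admitting a completely degenerate equilibrium of the identical Kuramoto system. Then every vertex of G has even degree. -/

import Mathlib

open Real

open Classical in
/-- Adjacency indicator: `1` if `j` and `k` are adjacent in `G`, `0` otherwise. -/
noncomputable def adjInd {V : Type*} (G : SimpleGraph V) (j k : V) : ℝ :=
  if G.Adj j k then 1 else 0

/-- A completely degenerate equilibrium of the identical Kuramoto system on `G`. -/
def IsCDE {V : Type*} [Fintype V] (G : SimpleGraph V) (θ : V → ℝ) : Prop :=
  (∀ k, ∑ j, adjInd G j k * Real.sin (θ j - θ k) = 0) ∧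
  (∀ j k, G.Adj j k → Real.cos (θ j - θ k) = 0)

/-- if `G` admits a completely degenerate equilibrium, every vertex has even
degree. -/
theorem stmt1 {N : ℕ} (G : SimpleGraph (Fin N)) [DecidableRel G.Adj]
    (h : ∃ θ : Fin N → ℝ, IsCDE G θ) :
    ∀ k : Fin N, Even (G.degree k) := by
  obtain ⟨θ, h1, h2⟩ := h
  intro k
  have key : ∀ s : Finset (Fin N), (∀ j ∈ s, Real.sin (θ j - θ k) = 1 ∨ Real.sin (θ j - θ k) = -1) →
      ∃ m : ℤ, ∑ j ∈ s, Real.sin (θ j - θ k) = (s.card : ℝ) + 2 * (m : ℝ) := by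
    intro s
    induction s using Finset.induction_on with
    | empty => intro _; exact ⟨0, by simp⟩
    | insert a s ha ih =>
      intro hs
      obtain ⟨m, hm⟩ := ih (fun j hj => hs j (Finset.mem_insert_of_mem hj))
      rw [Finset.sum_insert ha, Finset.card_insert_of_notMem ha, hm]
      rcases hs a (Finset.mem_insert_self a s) with h | h
      · exact ⟨m, by rw [h]; push_cast; ring⟩
      · exact ⟨m - 1, by rw [h]; push_cast; ring⟩
  obtain ⟨m, hm⟩ := key (G.neighborFinset k) (by
    intro j hj
    have hc := h2 j k ((G.mem_neighborFinset k j).1 hj).symm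
    have hsq := Real.sin_sq_add_cos_sq (θ j - θ k)
    rw [hc] at hsq
    exact mul_self_eq_one_iff.1 (by linarith))
  have hsum : ∑ j ∈ G.neighborFinset k, Real.sin (θ j - θ k) = 0 := by
    rw [← h1 k]
    rw [← Finset.sum_subset (Finset.subset_univ (G.neighborFinset k))]
    · refine Finset.sum_congr rfl fun j hj => ?_
      have : G.Adj j k := ((G.mem_neighborFinset k j).1 hj).symm
      simp [adjInd, this]
    · intro j _ hj
      have : ¬ G.Adj j k := fun h => hj ((G.mem_neighborFinset k j).2 h.symm)
      simp [adjInd, this]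
  rw [hsum, G.card_neighborFinset_eq_degree] at hm
  have hz : (0 : ℤ) = (G.degree k : ℤ) + 2 * m := by exact_mod_cast hm
  rw [Nat.even_iff]
  omega
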